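/- arXiv:1104.4971 — 5 statements merged into one kernel-verified Lean document; each statement's English description precedes it below -/
import Mathlib

section
/- Let n = V* ⊕ V be the modified cotangent Lie algebra associated to ρ. Then the canonical neutral symmetric bilinear form Q on V* ⊕ V, defined by Q((ξ,u),(η,v)) = ξ(v) + η(u), is nondegenerate and ad-invariant: Q([x,y],z) + Q(y,[x,z]) = 0 for all x,y,z ∈ n. -/
open scoped RealInnerProductSpace

variable (V : Type*) [NormedAddCommGroup V] [InnerProductSpace ℝ V]

/-- The functional `φ(u,v) ∈ V*` given by `φ(u,v)(w) = ⟨ρ(w)u, v⟩₊`. -/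
noncomputable def mcPhi (ρ : V →ₗ[ℝ] V →ₗ[ℝ] V) (u v : V) : Module.Dual ℝ V where
  toFun w := ⟪ρ w u, v⟫
  map_add' w w' := by simp [map_add, LinearMap.add_apply, inner_add_left]
  map_smul' a w := by simp [map_smul, LinearMap.smul_apply, inner_smul_left]

/-- The modified cotangent bracket on `V* ⊕ V`: `[(ξ,u),(η,v)] = (φ(u,v), 0)`. -/
noncomputable def mcBracket (ρ : V →ₗ[ℝ] V →ₗ[ℝ] V) :
    Module.Dual ℝ V × V → Module.Dual ℝ V × V → Module.Dual ℝ V × V :=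
  fun x y => (mcPhi V ρ x.2 y.2, 0)

/-- The canonical neutral symmetric bilinear form `Q((ξ,u),(η,v)) = ξ(v) + η(u)`
on `V* ⊕ V`. -/
def mcQ : Module.Dual ℝ V × V → Module.Dual ℝ V × V → ℝ :=
  fun x y => x.1 y.2 + y.1 x.2

/-- on the modified cotangent Lie algebra `n = V* ⊕ V`, the canonical
neutral symmetric bilinear form `Q((ξ,u),(η,v)) = ξ(v) + η(u)` is nondegenerate and
ad-invariant: `Q([x,y],z) + Q(y,[x,z]) = 0` for all `x, y, z ∈ n`. -/
theorem modified_cotangent_neutral_form_ad_invariant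
    [FiniteDimensional ℝ V] (ρ : V →ₗ[ℝ] V →ₗ[ℝ] V)
    (hskew : ∀ w u v : V, ⟪ρ w u, v⟫ = - ⟪u, ρ w v⟫)
    (hnull : ∀ u : V, ρ u u = 0) :
    (∀ x y : Module.Dual ℝ V × V, mcQ V x y = mcQ V y x) ∧
    (∀ x : Module.Dual ℝ V × V, (∀ y, mcQ V x y = 0) → x = 0) ∧
    (∀ x y z : Module.Dual ℝ V × V,
        mcQ V (mcBracket V ρ x y) z + mcQ V y (mcBracket V ρ x z) = 0) := by
  have hanti : ∀ a b : V, ρ a b = - ρ b a := by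
    intro a b
    have h := hnull (a + b)
    simp only [map_add, LinearMap.add_apply, hnull, zero_add, add_zero] at h
    first
      | exact eq_neg_of_add_eq_zero_left h
      | exact eq_neg_of_add_eq_zero_right h
  refine ⟨fun x y => by simp [mcQ, add_comm], ?_, ?_⟩
  · intro x hx
    have h1 : x.1 = 0 := by
      ext v
      simpa [mcQ] using hx (0, v)
    have h2 : x.2 = 0 := by
      have h := hx (innerₗ V x.2, 0)
      simpa [mcQ] using h
    exact Prod.ext h1 h2
  · intro x y z
    have key : ⟪ρ z.2 x.2, y.2⟫ + ⟪ρ y.2 x.2, z.2⟫ = 0 := by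
      rw [hanti z.2, hanti y.2, inner_neg_left, inner_neg_left, hskew x.2 z.2 y.2,
        real_inner_comm]
      ring
    simpa [mcQ, mcBracket, mcPhi] using key
end

section
/- Let n = V* ⊕ V be the modified cotangent Lie algebra associated to an injective linear map ρ : V → End(V) with each ρ(w) skew-adjoint and ρ(u)u = 0 for all u. Then the center of n equals V* ⊕ 0 and the commutator ideal [n,n] also equals V* ⊕ 0; in particular the center coincides with the commutator ideal. -/
open scoped RealInnerProductSpace

variable (V : Type*) [NormedAddCommGroup V] [InnerProductSpace ℝ V]

/-- for the modified cotangent Lie algebra `n = V* ⊕ V` associated to an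
injective linear `ρ` with each `ρ(w)` skew-adjoint and `ρ(u)u = 0`: the center of `n`
equals `V* ⊕ 0`, and the commutator ideal `[n,n]` also equals `V* ⊕ 0`; in particular
the center coincides with the commutator ideal. -/
theorem modified_cotangent_center_eq_commutator
    [FiniteDimensional ℝ V] (ρ : V →ₗ[ℝ] V →ₗ[ℝ] V) (hinj : Function.Injective ρ)
    (hskew : ∀ w u v : V, ⟪ρ w u, v⟫ = - ⟪u, ρ w v⟫)
    (hnull : ∀ u : V, ρ u u = 0) :
    ({x : Module.Dual ℝ V × V | ∀ y, mcBracket V ρ x y = 0} =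
      ((⊤ : Submodule ℝ (Module.Dual ℝ V)).prod (⊥ : Submodule ℝ V) :
        Set (Module.Dual ℝ V × V))) ∧
    (Submodule.span ℝ {z : Module.Dual ℝ V × V | ∃ x y, mcBracket V ρ x y = z} =
      (⊤ : Submodule ℝ (Module.Dual ℝ V)).prod (⊥ : Submodule ℝ V)) := by
  have hanti : ∀ u w : V, ρ u w = - ρ w u := by
    intro u w
    have h := hnull (u + w)
    simp only [map_add, LinearMap.add_apply, hnull, zero_add, add_zero] at h
    first
      | exact eq_neg_of_add_eq_zero_left h
      | exact eq_neg_of_add_eq_zero_right h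
  have hcenter : ∀ u : V, (∀ w, ρ w u = 0) → u = 0 := by
    intro u h
    apply hinj
    ext w
    rw [hanti, h w]
    simp
  constructor
  · ext ⟨ξ, u⟩
    simp only [Set.mem_setOf_eq, SetLike.mem_coe, Submodule.mem_prod, Submodule.mem_top,
      Submodule.mem_bot, true_and]
    constructor
    · intro h
      apply hcenter
      intro w
      have h1 := congrArg Prod.fst (h (0, ρ w u))
      have h2 : ⟪ρ w u, ρ w u⟫ = 0 := LinearMap.congr_fun h1 w
      exact inner_self_eq_zero.mp h2
    · rintro rfl y
      refine Prod.ext ?_ rfl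
      ext w
      simp [mcBracket, mcPhi]
  · apply le_antisymm
    · rw [Submodule.span_le]
      rintro z ⟨x, y, rfl⟩
      simp [mcBracket]
    · have htop : Submodule.span ℝ {f : Module.Dual ℝ V | ∃ u v, mcPhi V ρ u v = f} = ⊤ := by
        set W := Submodule.span ℝ {f : Module.Dual ℝ V | ∃ u v, mcPhi V ρ u v = f} with hW
        have hco : W.dualCoannihilator = ⊥ := by
          rw [eq_bot_iff]
          intro w hw
          rw [Submodule.mem_dualCoannihilator] at hw
          rw [Submodule.mem_bot]
          apply hinj
          ext u
          have h2 : ⟪ρ w u, ρ w u⟫ = 0 :=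
            hw (mcPhi V ρ u (ρ w u)) (Submodule.subset_span ⟨_, _, rfl⟩)
          rw [inner_self_eq_zero.mp h2]
          simp
        have := Subspace.dualCoannihilator_dualAnnihilator_eq (W := W)
        rw [← this, hco, Submodule.dualAnnihilator_bot]
      rintro ⟨f, v⟩ hz
      simp only [Submodule.mem_prod, Submodule.mem_bot] at hz
      obtain ⟨-, rfl⟩ := hz
      have hf : f ∈ Submodule.span ℝ {f : Module.Dual ℝ V | ∃ u v, mcPhi V ρ u v = f} := by
        rw [htop]; trivial
      have := Submodule.mem_map_of_mem (f := LinearMap.inl ℝ (Module.Dual ℝ V) V) hf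
      rw [Submodule.map_span] at this
      refine Submodule.span_mono ?_ this
      rintro _ ⟨_, ⟨u, v, rfl⟩, rfl⟩
      exact ⟨(0, u), (0, v), rfl⟩
end

section
/- Let (n, ⟨·,·⟩) be a finite-dimensional real 2-step nilpotent Lie algebra endowed with an ad-invariant metric (a nondegenerate symmetric ad-invariant bilinear form). Then there exist m ∈ ℕ, a nondegenerate symmetric bilinear form on ℝ^m (with ℝ^m abelian), a finite-dimensional real inner product space V, and an injective linear map ρ : V → End(V) with each ρ(w) skew-adjoint and ρ(u)u = 0 for all u, such that (n, ⟨·,·⟩) is isometrically isomorphic (via a Lie algebra isomorphism that carries one bilinear form to the other) to the orthogonal direct product of ℝ^m and the modified cotangent Lie algebra V* ⊕ V with its canonical neutral form Q((ξ,u),(η,v)) = ξ(v) + η(u). -/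
/-- The data of a finite-dimensional real inner product space `(V, ip)` together with an
injective linear map `ρ : V → End(V)` with each `ρ(w)` skew-adjoint and `ρ(u)u = 0`,
from which the modified cotangent Lie algebra `V* ⊕ V` is built. -/
structure ModifiedCotangentData where
  V : Type
  [addgrp : AddCommGroup V]
  [mod : Module ℝ V]
  [findim : FiniteDimensional ℝ V]
  /-- the inner product on `V` -/
  ip : V →ₗ[ℝ] V →ₗ[ℝ] ℝ
  ip_symm : ∀ u v : V, ip u v = ip v u
  ip_posdef : ∀ v : V, v ≠ 0 → 0 < ip v v
  /-- the injective linear map `ρ : V → End(V)` -/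
  ρ : V →ₗ[ℝ] V →ₗ[ℝ] V
  ρ_inj : Function.Injective ρ
  ρ_skew : ∀ w u v : V, ip (ρ w u) v = - ip u (ρ w v)
  ρ_null : ∀ u : V, ρ u u = 0

attribute [instance] ModifiedCotangentData.addgrp ModifiedCotangentData.mod
  ModifiedCotangentData.findim

/-- The functional `φ(u,v) ∈ V*` given by `φ(u,v)(w) = ⟨ρ(w)u, v⟩₊`. -/
def ModifiedCotangentData.phi (D : ModifiedCotangentData) (u v : D.V) :
    Module.Dual ℝ D.V where
  toFun w := D.ip (D.ρ w u) v
  map_add' w w' := by simp [map_add, LinearMap.add_apply]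
  map_smul' a w := by simp [map_smul, LinearMap.smul_apply]

/-- The modified cotangent bracket on `V* ⊕ V`: `[(ξ,u),(η,v)] = (φ(u,v), 0)`. -/
def ModifiedCotangentData.bracket (D : ModifiedCotangentData) :
    Module.Dual ℝ D.V × D.V → Module.Dual ℝ D.V × D.V → Module.Dual ℝ D.V × D.V :=
  fun x y => (D.phi x.2 y.2, 0)

/-- The canonical neutral form `Q((ξ,u),(η,v)) = ξ(v) + η(u)` on `V* ⊕ V`. -/
def ModifiedCotangentData.Q (D : ModifiedCotangentData) :
    Module.Dual ℝ D.V × D.V → Module.Dual ℝ D.V × D.V → ℝ :=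
  fun x y => x.1 y.2 + y.1 x.2


theorem exists_ip_aux (V : Type) [AddCommGroup V] [Module ℝ V] [FiniteDimensional ℝ V] :
    ∃ (ip : V →ₗ[ℝ] V →ₗ[ℝ] ℝ) (R : V ≃ₗ[ℝ] Module.Dual ℝ V),
      (∀ u v, ip u v = ip v u) ∧ (∀ v, v ≠ 0 → 0 < ip v v) ∧ ∀ u v, R u v = ip u v := by
  let e := (Module.finBasis ℝ V).equivFun
  let ip : V →ₗ[ℝ] V →ₗ[ℝ] ℝ := LinearMap.mk₂ ℝ (fun u v => e u ⬝ᵥ e v)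
    (by intros; simp) (by intros; simp) (by intros; simp) (by intros; simp)
  have hpos : ∀ v, v ≠ 0 → 0 < ip v v := by
    intro v hv
    have h0 : e v ≠ 0 := by simpa using hv
    have h1 : 0 ≤ e v ⬝ᵥ e v := Finset.sum_nonneg fun i _ => mul_self_nonneg _
    exact lt_of_le_of_ne h1 fun h => h0 (dotProduct_self_eq_zero.1 h.symm)
  have hinj : Function.Injective ip := by
    rw [← LinearMap.ker_eq_bot, LinearMap.ker_eq_bot']
    intro v hv
    by_contra h
    have := hpos v h
    rw [hv] at this
    simp at this
  refine ⟨ip, LinearMap.linearEquivOfInjective (V₂ := Module.Dual ℝ V) ip hinj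
    Subspace.dual_finrank_eq.symm, fun u v => dotProduct_comm (e u) (e v), hpos, fun u v => rfl⟩

/-- a finite-dimensional real 2-step nilpotent Lie algebra `(n, ⟨·,·⟩)`
with an ad-invariant metric is isometrically isomorphic (via a Lie algebra isomorphism
carrying one bilinear form to the other) to the orthogonal direct product of an abelian
`ℝ^m` with a nondegenerate symmetric bilinear form and a modified cotangent Lie algebra
`V* ⊕ V` with its canonical neutral form `Q`. -/
theorem two_step_ad_invariant_classification
    (n : Type) [LieRing n] [LieAlgebra ℝ n] [FiniteDimensional ℝ n]
    (form : n →ₗ[ℝ] n →ₗ[ℝ] ℝ)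
    (hsymm : ∀ x y : n, form x y = form y x)
    (hnondeg : ∀ x : n, (∀ y : n, form x y = 0) → x = 0)
    (hadinv : ∀ x y z : n, form ⁅x, y⁆ z + form y ⁅x, z⁆ = 0)
    (h2step : (∃ x y : n, ⁅x, y⁆ ≠ 0) ∧ ∀ x y z : n, ⁅⁅x, y⁆, z⁆ = 0) :
    ∃ (m : ℕ) (Bm : (Fin m → ℝ) →ₗ[ℝ] (Fin m → ℝ) →ₗ[ℝ] ℝ),
      (∀ a b : Fin m → ℝ, Bm a b = Bm b a) ∧
      (∀ a : Fin m → ℝ, (∀ b, Bm a b = 0) → a = 0) ∧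
      ∃ (D : ModifiedCotangentData)
        (f : n ≃ₗ[ℝ] (Fin m → ℝ) × (Module.Dual ℝ D.V × D.V)),
        (∀ x y : n, f ⁅x, y⁆ = ((0 : Fin m → ℝ), D.bracket (f x).2 (f y).2)) ∧
        (∀ x y : n, form x y = Bm (f x).1 (f y).1 + D.Q (f x).2 (f y).2) := by
  obtain ⟨-, h2⟩ := h2step
  -- the derived algebra
  let C : Submodule ℝ n := Submodule.span ℝ {c | ∃ x y : n, ⁅x, y⁆ = c}
  have hC : ∀ x y : n, ⁅x, y⁆ ∈ C := fun x y => Submodule.subset_span ⟨x, y, rfl⟩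
  let Bf : LinearMap.BilinForm ℝ n := form
  let Z : Submodule ℝ n := Bf.orthogonal C
  have hZ : ∀ x, x ∈ Z ↔ ∀ c ∈ C, form c x = 0 := fun x => Iff.rfl
  have hrefl : Bf.IsRefl := fun x y h => by
    change form y x = 0
    rw [hsymm]; exact h
  have hinjf : Function.Injective form := by
    rw [← LinearMap.ker_eq_bot, LinearMap.ker_eq_bot']
    intro v hv
    exact hnondeg v fun y => by rw [hv]; rfl
  have hsurjf : Function.Surjective form :=
    (LinearMap.injective_iff_surjective_of_finrank_eq_finrank
      (V₂ := Module.Dual ℝ n) Subspace.dual_finrank_eq.symm).1 hinjf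
  have hnd : Bf.Nondegenerate := by
    refine ⟨fun x hx => hnondeg x hx, fun x hx => hnondeg x fun y => ?_⟩
    rw [hsymm]; exact hx y
  have hZZ : Bf.orthogonal Z = C := LinearMap.BilinForm.orthogonal_orthogonal hnd hrefl C
  have hZC : ∀ x, (∀ z ∈ Z, form z x = 0) → x ∈ C := fun x hx => by
    rw [← hZZ]; exact hx
  -- elements of Z are central
  have hcent : ∀ z ∈ Z, ∀ x : n, ⁅x, z⁆ = 0 := by
    intro z hz x
    apply hnondeg
    intro y
    have := hadinv x z y
    rw [hsymm z, (hZ z).1 hz _ (hC x y)] at this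
    simpa using this
  have hcent2 : ∀ z ∈ Z, ∀ x : n, ⁅z, x⁆ = 0 := by
    intro z hz x
    rw [← lie_skew, hcent z hz x, neg_zero]
  have hCZ : C ≤ Z := by
    apply Submodule.span_le.2
    rintro _ ⟨x, y, rfl⟩
    refine (hZ _).2 fun c hc => ?_
    induction hc using Submodule.span_induction with
    | mem c h =>
      obtain ⟨a, b, rfl⟩ := h
      have := hadinv a b ⁅x, y⁆
      rw [← lie_skew a ⁅x, y⁆, h2] at this
      simpa using this
    | zero => simp
    | add a b _ _ ha hb => simp [ha, hb]
    | smul r a _ ha => simp [ha]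
  have hCC : ∀ c ∈ C, ∀ d ∈ C, form c d = 0 := fun c hc d hd => (hZ d).1 (hCZ hd) c hc
  obtain ⟨W, hW⟩ := Submodule.exists_isCompl Z
  let p : n →ₗ[ℝ] W := W.projectionOnto Z hW.symm
  have hpW : ∀ w : W, p w = w := fun w => by simp [p]
  have hpZ : ∀ z ∈ Z, p z = 0 := fun z hz => by
    simpa [p] using hz
  have hpx : ∀ x, x - p x ∈ Z := fun x => by
    have : p (x - p x) = 0 := by rw [map_sub, hpW, sub_self]
    exact (Submodule.projectionOnto_apply_eq_zero_iff hW.symm).1 this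
  have hpker : ∀ x, p x = 0 → x ∈ Z := fun x h => by
    have := hpx x
    rw [h] at this
    simpa using this
  -- duality between C and W
  let T0 : C →ₗ[ℝ] Module.Dual ℝ W := form.domRestrict₁₂ C W
  have hT0 : ∀ (c : C) (w : W), T0 c w = form c w := fun c w => rfl
  have hT0bij : Function.Bijective T0 := by
    constructor
    · rw [← LinearMap.ker_eq_bot, LinearMap.ker_eq_bot']
      intro c hc
      ext
      apply hnondeg
      intro y
      have h1 : form c (p y) = 0 := by rw [← hT0, hc]; rfl
      have h2 := (hZ _).1 (hpx y) c c.2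
      rw [map_sub, h1, sub_zero] at h2
      exact h2
    · intro ξ
      obtain ⟨x, hx⟩ := hsurjf (ξ ∘ₗ p)
      have hx' : ∀ y, form x y = ξ (p y) := fun y => by rw [hx]; rfl
      refine ⟨⟨x, hZC x fun z hz => ?_⟩, ?_⟩
      · rw [hsymm, hx', hpZ z hz, map_zero]
      · ext w
        rw [hT0]
        simp only [hx', hpW]
  let T : C ≃ₗ[ℝ] Module.Dual ℝ W := LinearEquiv.ofBijective T0 hT0bij
  have hTs : ∀ (ξ : Module.Dual ℝ W) (w : W), form (T.symm ξ) w = ξ w := fun ξ w => by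
    rw [← hT0]
    change T (T.symm ξ) w = _
    rw [T.apply_symm_apply]
  -- isotropic section
  let k : W →ₗ[ℝ] C := T.symm.toLinearMap ∘ₗ ((1/2 : ℝ) • form.domRestrict₁₂ W W)
  have hk : ∀ u v : W, form (k u) v = 1/2 * form u v := fun u v => hTs _ _
  let s : W →ₗ[ℝ] n := W.subtype - C.subtype ∘ₗ k
  have hs : ∀ w, s w = w - k w := fun w => rfl
  have hcs : ∀ c ∈ C, ∀ w, form c (s w) = form c w := fun c hc w => by
    rw [hs, map_sub, hCC c hc _ (k w).2, sub_zero]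
  have hss : ∀ u v, form (s u) (s v) = 0 := fun u v => by
    rw [hs u, map_sub, LinearMap.sub_apply, hcs _ (k u).2, hk, hs v, map_sub,
      hsymm u (k v), hk, hsymm v u]
    ring
  have hps : ∀ w, p (s w) = w := fun w => by
    rw [hs, map_sub, hpW, hpZ _ (hCZ (k w).2), sub_zero]
  have hxs : ∀ x, x - s (p x) ∈ Z := fun x => by
    have h := Z.add_mem (hpx x) (hCZ (k (p x)).2)
    rw [hs]
    convert h using 1
    abel
  have hbr : ∀ x y, ⁅s (p x), s (p y)⁆ = ⁅x, y⁆ := fun x y => by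
    have h1 := hcent2 _ (hxs x) (s (p y))
    have h2 := hcent _ (hxs y) x
    rw [sub_lie, sub_eq_zero] at h1
    rw [lie_sub, sub_eq_zero] at h2
    rw [← h1, ← h2]
  -- the data
  obtain ⟨ip, R, ip_symm, ip_pos, hR⟩ := exists_ip_aux W
  let B : W →ₗ[ℝ] W →ₗ[ℝ] Module.Dual ℝ W :=
    LinearMap.mk₂ ℝ (fun w u => (form (s w)) ∘ₗ (LieAlgebra.ad ℝ n (s u)).comp s)
      (by intros; ext; simp) (by intros; ext; simp) (by intros; ext; simp)
      (by intros; ext; simp)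
  have hB : ∀ w u v, B w u v = form (s w) ⁅s u, s v⁆ := fun w u v => rfl
  let ρ : W →ₗ[ℝ] W →ₗ[ℝ] W := B.compr₂ R.symm.toLinearMap
  have hρ : ∀ w u v, ip (ρ w u) v = form (s w) ⁅s u, s v⁆ := fun w u v => by
    rw [← hR, ← hB]
    change R (R.symm (B w u)) v = _
    rw [R.apply_symm_apply]
  have ip_zero : ∀ u, (∀ v, ip u v = 0) → u = 0 := fun u h => by
    by_contra h0
    have := ip_pos u h0
    rw [h] at this
    exact lt_irrefl _ this
  let D : ModifiedCotangentData :=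
    { V := W
      ip := ip
      ip_symm := ip_symm
      ip_posdef := ip_pos
      ρ := ρ
      ρ_inj := by
        rw [← LinearMap.ker_eq_bot, LinearMap.ker_eq_bot']
        intro w hw
        have h1 : s w ∈ Z := by
          refine (hZ _).2 fun c hc => ?_
          induction hc using Submodule.span_induction with
          | mem c h =>
            obtain ⟨a, b, rfl⟩ := h
            rw [hsymm, ← hbr, ← hρ, hw]
            simp
          | zero => simp
          | add a b _ _ ha hb => simp [ha, hb]
          | smul r a _ ha => simp [ha]
        rw [← hps w, hpZ _ h1]
      ρ_skew := by
        intro w u v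
        rw [ip_symm u, hρ, hρ, ← lie_skew, map_neg]
      ρ_null := by
        intro u
        apply ip_zero
        intro v
        rw [hρ]
        have := hadinv (s u) (s u) (s v)
        simpa using this }
  -- the abelian factor
  let E : Submodule ℝ n := Z ⊓ Bf.orthogonal (LinearMap.range s)
  have hE : ∀ x, x ∈ E ↔ x ∈ Z ∧ ∀ w, form (s w) x = 0 := fun x => by
    refine and_congr Iff.rfl ⟨fun h w => h _ ⟨w, rfl⟩, ?_⟩
    rintro h _ ⟨w, rfl⟩
    exact h w
  let ξ : n →ₗ[ℝ] Module.Dual ℝ W := LinearMap.compl₂ form s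
  have hξ : ∀ x w, ξ x w = form x (s w) := fun x w => rfl
  let c : n →ₗ[ℝ] C := T.symm.toLinearMap ∘ₗ ξ
  have hc : ∀ x w, form (c x) (s w) = form x (s w) := fun x w => by
    rw [hcs _ (c x).2]; exact hTs _ _
  have hc' : ∀ x (d : C), (∀ w, form x (s w) = form d (s w)) → c x = d := fun x d h => by
    change T.symm (ξ x) = d
    rw [LinearEquiv.symm_apply_eq]
    ext w
    rw [hξ, h, hcs _ d.2]; rfl
  let e : n →ₗ[ℝ] E := LinearMap.codRestrict E
    (LinearMap.id - C.subtype ∘ₗ c - s ∘ₗ p) (by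
      intro x
      change x - c x - s (p x) ∈ E
      refine (hE _).2 ⟨?_, fun w => ?_⟩
      · have h := Z.sub_mem (hxs x) (hCZ (c x).2)
        convert h using 1
        abel
      · rw [map_sub, map_sub, hss, hsymm _ (c x : n), hc, hsymm x]
        ring)
  have he : ∀ x, (e x : n) = x - c x - s (p x) := fun x => rfl
  let b : E ≃ₗ[ℝ] (Fin (Module.finrank ℝ E) → ℝ) := (Module.finBasis ℝ E).equivFun
  have hξE : ∀ x ∈ E, ξ x = 0 := fun x hx => by
    ext w
    rw [hξ, hsymm, ((hE x).1 hx).2]; rfl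
  have hpC : ∀ d : C, p d = 0 := fun d => hpZ _ (hCZ d.2)
  have hξT : ∀ η : Module.Dual ℝ W, ξ (T.symm η) = η := fun η => by
    ext w
    rw [hξ, hcs _ (T.symm η).2, hTs]
  have hξs : ∀ w, ξ (s w) = 0 := fun w => by
    ext u
    rw [hξ, hss]; rfl
  let F : n →ₗ[ℝ] (Fin (Module.finrank ℝ E) → ℝ) × (Module.Dual ℝ W × W) :=
    (b.toLinearMap ∘ₗ e).prod (ξ.prod p)
  have hF : Function.Bijective F := by
    constructor
    · rw [← LinearMap.ker_eq_bot, LinearMap.ker_eq_bot']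
      intro x hx
      have h1 : b (e x) = 0 := congrArg Prod.fst hx
      have h2 : ξ x = 0 := congrArg (fun t => t.2.1) hx
      have h3 : p x = 0 := congrArg (fun t => t.2.2) hx
      have h4 : e x = 0 := by simpa using h1
      have h5 : c x = 0 := by
        change T.symm (ξ x) = 0
        rw [h2, map_zero]
      have h6 := he x
      rw [h4, h5, h3] at h6
      simpa using h6.symm
    · rintro ⟨a, η, v⟩
      obtain ⟨q, rfl⟩ := b.surjective a
      have hq := (hE q).1 q.2
      have hx2 : ξ (q + T.symm η + s v) = η := by
        rw [map_add, map_add, hξE _ q.2, hξT, hξs]; simp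
      have hx3 : p (q + T.symm η + s v) = v := by
        rw [map_add, map_add, hpZ _ hq.1, hpC, hps]; simp
      refine ⟨q + T.symm η + s v, ?_⟩
      refine Prod.ext ?_ (Prod.ext hx2 hx3)
      change b (e _) = b q
      congr 1
      ext
      rw [he, hx3]
      change _ - ((T.symm (ξ _) : C) : n) - _ = _
      rw [hx2]
      abel
  refine ⟨Module.finrank ℝ E,
    (form.domRestrict₁₂ E E).compl₁₂ b.symm.toLinearMap b.symm.toLinearMap,
    fun a a' => hsymm _ _, ?_, D, LinearEquiv.ofBijective F hF, ?_, ?_⟩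
  · intro a ha
    obtain ⟨q, rfl⟩ := b.surjective a
    have ha' : ∀ q' : E, form q q' = 0 := fun q' => by
      have := ha (b q')
      change form (b.symm (b q)) (b.symm (b q')) = 0 at this
      simpa using this
    have hq := (hE q).1 q.2
    have : (q : n) = 0 := by
      apply hnondeg
      intro y
      have hy : y = e y + c y + s (p y) := by rw [he]; abel
      rw [hy, map_add, map_add, ha', hsymm _ (c y : n), (hZ _).1 hq.1 _ (c y).2, hsymm _ (s _),
        hq.2]
      simp
    have : q = 0 := Subtype.ext this
    rw [this, map_zero]
  · intro x y
    have h3 : p ⁅x, y⁆ = 0 := hpZ _ (hCZ (hC x y))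
    have h4 : c ⁅x, y⁆ = ⟨⁅x, y⁆, hC x y⟩ := hc' _ _ fun w => rfl
    refine Prod.ext ?_ (Prod.ext ?_ h3)
    · change b (e _) = 0
      have : e ⁅x, y⁆ = 0 := by
        ext
        rw [he, h3, h4]
        simp
      rw [this, map_zero]
    · refine LinearMap.ext fun w => ?_
      change form ⁅x, y⁆ (s w) = ip (ρ w (p x)) (p y)
      rw [hρ, hbr, hsymm]
  · intro x y
    change form x y = form (b.symm (b (e x))) (b.symm (b (e y))) +
      (form x (s (p y)) + form y (s (p x)))
    rw [b.symm_apply_apply, b.symm_apply_apply]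
    have hx : x = e x + c x + s (p x) := by rw [he]; abel
    have hy : y = e y + c y + s (p y) := by rw [he]; abel
    have hex := (hE _).1 (e x).2
    have hey := (hE _).1 (e y).2
    have h1 : form (e x) (c y) = 0 := by rw [hsymm]; exact (hZ _).1 hex.1 _ (c y).2
    have h2 : form (c x) (e y) = 0 := (hZ _).1 hey.1 _ (c x).2
    have h3 : form (e x) (s (p y)) = 0 := by rw [hsymm]; exact hex.2 _
    rw [← hc x, ← hc y]
    conv_lhs => rw [hx, hy]
    simp only [map_add, LinearMap.add_apply]
    rw [h1, h2, h3, hey.2, hCC _ (c x).2 _ (c y).2, hss, hsymm (s (p x)) (c y)]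
    ring
end

section
/- The set Γ = {(k₁, k₂, k₃, 2k₄, k₅, 2k₆) : k₁,…,k₆ ∈ ℤ} is a subgroup of the group (ℝ⁶, ·), where · is the multiplication (x₁,…,x₆)·(y₁,…,y₆) = (x₁+y₁+½(x₄y₅−x₅y₄), x₂+y₂+½(x₄y₆−x₆y₄), x₃+y₃+½(x₅y₆−x₆y₅), x₄+y₄, x₅+y₅, x₆+y₆). -/
/-- The multiplication on `ℝ⁶` modelling the simply connected Lie group `T*H₃`
(coordinates indexed by `0,…,5` correspond to `x₁,…,x₆`). -/
noncomputable def h3Mul (x y : Fin 6 → ℝ) : Fin 6 → ℝ :=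
  ![x 0 + y 0 + (1/2) * (x 3 * y 4 - x 4 * y 3),
    x 1 + y 1 + (1/2) * (x 3 * y 5 - x 5 * y 3),
    x 2 + y 2 + (1/2) * (x 4 * y 5 - x 5 * y 4),
    x 3 + y 3, x 4 + y 4, x 5 + y 5]

/-- The set `Γ = {(k₁, k₂, k₃, 2k₄, k₅, 2k₆) : kᵢ ∈ ℤ}`. -/
def h3Gamma : Set (Fin 6 → ℝ) :=
  {x | ∃ k : Fin 6 → ℤ,
    x 0 = k 0 ∧ x 1 = k 1 ∧ x 2 = k 2 ∧ x 3 = 2 * k 3 ∧ x 4 = k 4 ∧ x 5 = 2 * k 5}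

/-- `Γ = {(k₁,k₂,k₃,2k₄,k₅,2k₆) : kᵢ ∈ ℤ}` is a subgroup of the group
`(ℝ⁶, ·)` with the `T*H₃` multiplication: it contains the identity `0`, and is closed
under the multiplication and under the inversion `x ↦ -x`. -/
theorem h3Gamma_subgroup :
    (0 : Fin 6 → ℝ) ∈ h3Gamma ∧
    (∀ x y : Fin 6 → ℝ, x ∈ h3Gamma → y ∈ h3Gamma → h3Mul x y ∈ h3Gamma) ∧
    (∀ x : Fin 6 → ℝ, x ∈ h3Gamma → -x ∈ h3Gamma) := by
  refine ⟨⟨0, by simp⟩, ?_, ?_⟩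
  · rintro x y ⟨k, h0, h1, h2, h3, h4, h5⟩ ⟨l, g0, g1, g2, g3, g4, g5⟩
    refine ⟨![k 0 + l 0 + (k 3 * l 4 - k 4 * l 3),
      k 1 + l 1 + 2 * (k 3 * l 5 - k 5 * l 3),
      k 2 + l 2 + (k 4 * l 5 - k 5 * l 4),
      k 3 + l 3, k 4 + l 4, k 5 + l 5], ?_, ?_, ?_, ?_, ?_, ?_⟩ <;>
    simp [h3Mul, h0, h1, h2, h3, h4, h5, g0, g1, g2, g3, g4, g5] <;> ring
  · rintro x ⟨k, h0, h1, h2, h3, h4, h5⟩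
    exact ⟨-k, by simp [h0, h1, h2, h3, h4, h5]⟩
end

section
/- On the 5-dimensional real vector space with basis e₁,…,e₅, the alternating bilinear bracket determined by [e₁,e₂] = e₃, [e₁,e₃] = e₄, [e₂,e₃] = e₅ (all other basis brackets zero) satisfies the Jacobi identity and defines a 3-step nilpotent Lie algebra a(1,2) (nonzero triple brackets exist, all quadruple brackets vanish). Moreover the symmetric bilinear form Q determined by Q(e₁,e₁) = −1, Q(e₁,e₅) = 1, Q(e₂,e₄) = −1, Q(e₃,e₃) = 1 (all other pairings of basis vectors zero) is nondegenerate and ad-invariant: Q([x,y],z) + Q(y,[x,z]) = 0 for all x,y,z. -/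
/-- The bracket on `ℝ⁵` determined by `[e₁,e₂] = e₃`, `[e₁,e₃] = e₄`, `[e₂,e₃] = e₅`
(the free 3-step nilpotent Lie algebra `a(1,2)`); `eᵢ` is the `i`-th standard basis
vector, indexed by `0,…,4`. -/
def a12Bracket (x y : Fin 5 → ℝ) : Fin 5 → ℝ :=
  ![0, 0,
    x 0 * y 1 - x 1 * y 0,
    x 0 * y 2 - x 2 * y 0,
    x 1 * y 2 - x 2 * y 1]

/-- The symmetric bilinear form `Q` with `Q(e₁,e₁) = −1`, `Q(e₁,e₅) = 1`,
`Q(e₂,e₄) = −1`, `Q(e₃,e₃) = 1` and all other pairings of basis vectors zero. -/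
def a12Q (x y : Fin 5 → ℝ) : ℝ :=
  -(x 0 * y 0) + x 0 * y 4 + x 4 * y 0 - x 1 * y 3 - x 3 * y 1 + x 2 * y 2

/-- on the 5-dimensional real vector space with basis `e₁,…,e₅`, the
alternating bilinear bracket determined by `[e₁,e₂] = e₃`, `[e₁,e₃] = e₄`,
`[e₂,e₃] = e₅` satisfies the Jacobi identity and defines a 3-step nilpotent Lie algebra
`a(1,2)` (some triple bracket is nonzero, all quadruple brackets vanish); moreover the
symmetric bilinear form `Q` with `Q(e₁,e₁) = −1`, `Q(e₁,e₅) = 1`, `Q(e₂,e₄) = −1`,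
`Q(e₃,e₃) = 1` (other basis pairings zero) is nondegenerate and ad-invariant. -/
theorem a12_three_step_ad_invariant :
    (a12Bracket (fun i => if i = 0 then 1 else 0) (fun i => if i = 1 then 1 else 0) =
      fun i => if i = 2 then 1 else 0) ∧
    (a12Bracket (fun i => if i = 0 then 1 else 0) (fun i => if i = 2 then 1 else 0) =
      fun i => if i = 3 then 1 else 0) ∧
    (a12Bracket (fun i => if i = 1 then 1 else 0) (fun i => if i = 2 then 1 else 0) =
      fun i => if i = 4 then 1 else 0) ∧
    (∀ (a : ℝ) (x y z : Fin 5 → ℝ),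
        a12Bracket (a • x + y) z = a • a12Bracket x z + a12Bracket y z) ∧
    (∀ (a : ℝ) (x y z : Fin 5 → ℝ),
        a12Bracket x (a • y + z) = a • a12Bracket x y + a12Bracket x z) ∧
    (∀ x : Fin 5 → ℝ, a12Bracket x x = 0) ∧
    (∀ x y z : Fin 5 → ℝ,
        a12Bracket (a12Bracket x y) z + a12Bracket (a12Bracket y z) x +
          a12Bracket (a12Bracket z x) y = 0) ∧
    (∃ x y z : Fin 5 → ℝ, a12Bracket (a12Bracket x y) z ≠ 0) ∧
    (∀ x y z w : Fin 5 → ℝ, a12Bracket (a12Bracket (a12Bracket x y) z) w = 0) ∧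
    (∀ x y : Fin 5 → ℝ, a12Q x y = a12Q y x) ∧
    (∀ x : Fin 5 → ℝ, (∀ y, a12Q x y = 0) → x = 0) ∧
    (∀ x y z : Fin 5 → ℝ, a12Q (a12Bracket x y) z + a12Q y (a12Bracket x z) = 0) := by
  have ext5 : ∀ u v : Fin 5 → ℝ, u 0 = v 0 → u 1 = v 1 → u 2 = v 2 → u 3 = v 3 →
      u 4 = v 4 → u = v := by
    intro u v h0 h1 h2 h3 h4
    funext i
    fin_cases i <;> assumption
  have b0 : ∀ x y, a12Bracket x y 0 = 0 := fun _ _ => rfl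
  have b1 : ∀ x y, a12Bracket x y 1 = 0 := fun _ _ => rfl
  have b2 : ∀ x y, a12Bracket x y 2 = x 0 * y 1 - x 1 * y 0 := fun _ _ => rfl
  have b3 : ∀ x y, a12Bracket x y 3 = x 0 * y 2 - x 2 * y 0 := fun _ _ => rfl
  have b4 : ∀ x y, a12Bracket x y 4 = x 1 * y 2 - x 2 * y 1 := fun _ _ => rfl
  refine ⟨?_, ?_, ?_, ?_, ?_, ?_, ?_, ?_, ?_, ?_, ?_, ?_⟩
  · apply ext5 <;> simp [b0, b1, b2, b3, b4]
  · apply ext5 <;> simp [b0, b1, b2, b3, b4]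
  · apply ext5 <;> simp [b0, b1, b2, b3, b4]
  · intro a x y z
    apply ext5 <;> simp only [b0, b1, b2, b3, b4, Pi.add_apply, Pi.smul_apply, smul_eq_mul] <;> ring
  · intro a x y z
    apply ext5 <;> simp only [b0, b1, b2, b3, b4, Pi.add_apply, Pi.smul_apply, smul_eq_mul] <;> ring
  · intro x
    apply ext5 <;> simp only [b0, b1, b2, b3, b4, Pi.zero_apply] <;> ring
  · intro x y z
    apply ext5 <;> simp only [b0, b1, b2, b3, b4, Pi.add_apply, Pi.zero_apply] <;> ring
  · refine ⟨![1, 0, 0, 0, 0], ![0, 1, 0, 0, 0], ![1, 0, 0, 0, 0], fun h => ?_⟩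
    have h3 := congrFun h 3
    simp [b0, b2, b3] at h3
  · intro x y z w
    apply ext5 <;> simp only [b0, b1, b2, b3, b4, Pi.zero_apply] <;> ring
  · intro x y
    unfold a12Q
    ring
  · intro x h
    have h0 := h ![1, 0, 0, 0, 0]
    have h1 := h ![0, 1, 0, 0, 0]
    have h2 := h ![0, 0, 1, 0, 0]
    have h3 := h ![0, 0, 0, 1, 0]
    have h4 := h ![0, 0, 0, 0, 1]
    simp [a12Q] at h0 h1 h2 h3 h4
    apply ext5 <;> simp only [Pi.zero_apply] <;> linarith
  · intro x y z
    simp only [a12Q, b0, b1, b2, b3, b4]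
    ring
end
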